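/- Let n ≥ 1, s ∈ (0,1), and let K be an admissible kernel. Assume 1 < q ≤ n/(n−2s) if n > 2s, and 1 < q < ∞ if n ≤ 2s. Then every nonnegative weak supersolution u of L_K u = u^q in ℝⁿ satisfies u = 0 almost everywhere in ℝⁿ. -/

import Mathlib

open MeasureTheory Metric

noncomputable section

abbrev Euc (n : ℕ) := EuclideanSpace ℝ (Fin n)

def IsAdmissibleKernel (n : ℕ) (s lam Lam : ℝ) (K : Euc n → ℝ) : Prop :=
  0 < lam ∧ lam ≤ Lam ∧ Measurable K ∧
  (∀ z : Euc n, z ≠ 0 → K z = K (-z)) ∧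
  (∀ z : Euc n, z ≠ 0 →
    lam * ‖z‖ ^ (-(n : ℝ) - 2 * s) ≤ K z ∧ K z ≤ Lam * ‖z‖ ^ (-(n : ℝ) - 2 * s))

def LK (n : ℕ) (K φ : Euc n → ℝ) (x : Euc n) : ℝ :=
  (1 / 2) * ∫ z : Euc n, (2 * φ x - φ (x + z) - φ (x - z)) * K z

def IsTestFun (n : ℕ) (φ : Euc n → ℝ) : Prop :=
  ContDiff ℝ (⊤ : ℕ∞) φ ∧ HasCompactSupport φ

def MemL1Tail (n : ℕ) (s : ℝ) (u : Euc n → ℝ) : Prop :=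
  LocallyIntegrable u volume ∧
  Integrable (fun x : Euc n => |u x| * (1 + ‖x‖) ^ (-(n : ℝ) - 2 * s)) volume

def MemLqLoc (n : ℕ) (q : ℝ) (u : Euc n → ℝ) : Prop :=
  ∀ R : ℝ, 0 < R → IntegrableOn (fun x : Euc n => u x ^ q) (ball (0 : Euc n) R) volume

def IsWeakSupersol (n : ℕ) (s q : ℝ) (K u : Euc n → ℝ) : Prop :=
  Measurable u ∧ (∀ x, 0 ≤ u x) ∧ MemLqLoc n q u ∧ MemL1Tail n s u ∧
  ∀ φ : Euc n → ℝ, IsTestFun n φ → (∀ x, 0 ≤ φ x) →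
    (∫ x : Euc n, u x ^ q * φ x) ≤ ∫ x : Euc n, u x * LK n K φ x

def IsCutoff (n : ℕ) (η : Euc n → ℝ) : Prop :=
  ContDiff ℝ (⊤ : ℕ∞) η ∧ (∀ x, 0 ≤ η x ∧ η x ≤ 1) ∧
  (∀ x : Euc n, ‖x‖ ≤ 1 → η x = 1) ∧ (∀ x : Euc n, 2 ≤ ‖x‖ → η x = 0)

def cutoffSq (n : ℕ) (η : Euc n → ℝ) (R : ℝ) : Euc n → ℝ :=
  fun x => (η (R⁻¹ • x)) ^ 2

/-! The inequality is tested against `η_R ^ (k + 1)`, where `η_R = η(· / R)` is a cutoff at scale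
`R`. Convexity of `t ↦ t ^ (k + 1)` and scaling give `L(η_R ^ (k + 1)) ≤ A R ^ (-2s) η_R ^ k`, hence
`∫ u ^ q η_R ^ (k + 1) ≤ A R ^ (-2s) ∫ u η_R ^ k`. With `k` large, Hölder's inequality bounds the
right-hand side by `A R ^ (-2s + n / q') (∫ u ^ q η_R ^ (k + 1)) ^ (1 / q)` up to a constant, and
`q ≤ n / (n - 2s)` says precisely that `n ≤ 2s q'`; so `∫ u ^ q < ∞`. Now split the right-hand side
at a fixed radius `ρ`: the part inside is `O(R ^ (-2s))`, and Hölder's inequality on the part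
outside leaves only the tail of `∫ u ^ q`. Letting `R → ∞` and then `ρ → ∞` gives `∫ u ^ q = 0`. -/

open Set Filter Topology Module
open scoped NNReal

section SecondDifference

/-- The symmetric second difference `2 f(x) - f(x + z) - f(x - z)`, which `LK` integrates
against the kernel. -/
def secondDiff {E : Type*} [AddGroup E] (f : E → ℝ) (x z : E) : ℝ := 2 * f x - f (x + z) - f (x - z)

theorem pow_succ_sub_pow_succ_le {a b : ℝ} (ha : 0 ≤ a) (hb : 0 ≤ b) (k : ℕ) :
    a ^ (k + 1) - b ^ (k + 1) ≤ (k + 1) * a ^ k * (a - b) := by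
  induction k with
  | zero => simp
  | succ k ih =>
    push_cast
    calc a ^ (k + 1 + 1) - b ^ (k + 1 + 1)
        = a ^ (k + 1) * (a - b) + b * (a ^ (k + 1) - b ^ (k + 1)) := by ring
      _ ≤ a ^ (k + 1) * (a - b) + b * ((k + 1) * a ^ k * (a - b)) := by gcongr
      _ = (k + 1 + 1) * a ^ (k + 1) * (a - b) - (k + 1) * a ^ k * (a - b) ^ 2 := by ring
      _ ≤ (k + 1 + 1) * a ^ (k + 1) * (a - b) := sub_le_self _ (by positivity)

/-- The pointwise form of the Córdoba–Córdoba inequality, for the convex function `t ↦ t ^ (k + 1)`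
on `[0, ∞)`. -/
theorem secondDiff_pow_le {E : Type*} [AddGroup E] {f : E → ℝ} (hf : ∀ x, 0 ≤ f x) (k : ℕ)
    (x z : E) :
    secondDiff (fun y ↦ f y ^ (k + 1)) x z ≤ (k + 1) * f x ^ k * secondDiff f x z := by
  unfold secondDiff
  linarith [pow_succ_sub_pow_succ_le (hf x) (hf (x + z)) k,
    pow_succ_sub_pow_succ_le (hf x) (hf (x - z)) k]

theorem secondDiff_comp_smul {M E : Type*} [Monoid M] [AddGroup E] [DistribMulAction M E]
    (f : E → ℝ) (c : M) (x z : E) :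
    secondDiff (fun y ↦ f (c • y)) x z = secondDiff f (c • x) (c • z) := by
  simp only [secondDiff, smul_add, smul_sub]

variable {E : Type*} [NormedAddCommGroup E] [NormedSpace ℝ E]

theorem norm_add_sub_sub_fderiv_le_of_lipschitzWith_fderiv {F : Type*} [NormedAddCommGroup F]
    [NormedSpace ℝ F] {f : E → F} {C : ℝ≥0} (hf : Differentiable ℝ f)
    (hC : LipschitzWith C (fderiv ℝ f)) (x z : E) :
    ‖f (x + z) - f x - fderiv ℝ f x z‖ ≤ C * ‖z‖ ^ 2 := by
  have hball : ∀ y ∈ closedBall x ‖z‖, ‖fderiv ℝ f y - fderiv ℝ f x‖ ≤ C * ‖z‖ := fun y hy ↦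
    (hC.norm_sub_le y x).trans (by gcongr; exact mem_closedBall_iff_norm.1 hy)
  have := (convex_closedBall x ‖z‖).norm_image_sub_le_of_norm_hasFDerivWithin_le'
    (fun y _ ↦ (hf y).hasFDerivAt.hasFDerivWithinAt) hball
    (mem_closedBall_self (norm_nonneg z)) (y := x + z) (by simp)
  simpa only [add_sub_cancel_left, mul_assoc, ← sq] using this

theorem abs_secondDiff_le_of_lipschitzWith_fderiv {f : E → ℝ} {C : ℝ≥0}
    (hf : Differentiable ℝ f) (hC : LipschitzWith C (fderiv ℝ f)) (x z : E) :
    |secondDiff f x z| ≤ 2 * C * ‖z‖ ^ 2 := by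
  have hpos := norm_add_sub_sub_fderiv_le_of_lipschitzWith_fderiv hf hC x z
  have hneg := norm_add_sub_sub_fderiv_le_of_lipschitzWith_fderiv hf hC x (-z)
  rw [norm_neg, map_neg, ← sub_eq_add_neg] at hneg
  rw [Real.norm_eq_abs, abs_le] at hpos hneg
  rw [secondDiff, abs_le]
  constructor <;> linarith [hpos.1, hpos.2, hneg.1, hneg.2]

theorem exists_abs_secondDiff_le_mul_min {f : E → ℝ} (hf : ContDiff ℝ 2 f)
    (hc : HasCompactSupport f) :
    ∃ C, 0 ≤ C ∧ ∀ x z, |secondDiff f x z| ≤ C * min 1 (‖z‖ ^ 2) := by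
  obtain ⟨L, hL⟩ := (hf.fderiv_right (m := 1) (by norm_num)).lipschitzWith_of_hasCompactSupport
    (hc.fderiv ℝ) one_ne_zero
  obtain ⟨M, hM⟩ := hf.continuous.bounded_above_of_compact_support hc
  have hM0 : 0 ≤ M := (norm_nonneg _).trans (hM 0)
  refine ⟨max (4 * M) (2 * L), by positivity, fun x z ↦ ?_⟩
  have hbounded : |secondDiff f x z| ≤ 4 * M := by
    have h (y : E) := abs_le.1 (hM y)
    rw [secondDiff, abs_le]
    constructor <;> linarith [(h x).1, (h x).2, (h (x + z)).1, (h (x + z)).2, (h (x - z)).1,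
      (h (x - z)).2]
  have hquadratic : |secondDiff f x z| ≤ 2 * L * ‖z‖ ^ 2 :=
    abs_secondDiff_le_of_lipschitzWith_fderiv (hf.differentiable two_ne_zero) hL x z
  rw [mul_min_of_nonneg _ _ (by positivity), le_min_iff, mul_one]
  exact ⟨hbounded.trans (le_max_left _ _), hquadratic.trans (by gcongr; exact le_max_right _ _)⟩

end SecondDifference

section Kernel

variable {E : Type*} [NormedAddCommGroup E] [NormedSpace ℝ E]

/-- `levyProfile σ z = min(1, |z|²) |z|^(-d - σ)` with `d = dim E`: the integrable majorant of
`|secondDiff f x z| K z` for a kernel `K` of order `σ`. -/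
def levyProfile (σ : ℝ) (z : E) : ℝ := min 1 (‖z‖ ^ 2) * ‖z‖ ^ (-(finrank ℝ E : ℝ) - σ)

theorem levyProfile_nonneg (σ : ℝ) (z : E) : 0 ≤ levyProfile σ z := by
  unfold levyProfile; positivity

/-- Nonnegative kernels `K` bounded above by the kernel `Λ |z|^(-d - σ)` of the `σ`-stable operator,
where `d = dim E`. -/
structure IsStableDominated [MeasurableSpace E] (σ Λ : ℝ) (K : E → ℝ) : Prop where
  measurable : Measurable K
  nonneg : ∀ z, z ≠ 0 → 0 ≤ K z
  le : ∀ z, z ≠ 0 → K z ≤ Λ * ‖z‖ ^ (-(finrank ℝ E : ℝ) - σ)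

/-- The kernel seen at scale `R`, normalised so that the bound of `IsStableDominated` is
scale invariant. -/
def rescaledKernel (σ R : ℝ) (K : E → ℝ) (z : E) : ℝ := R ^ ((finrank ℝ E : ℝ) + σ) * K (R • z)

variable [MeasurableSpace E] {σ Λ R : ℝ} {K : E → ℝ}

theorem IsStableDominated.const_nonneg [Nontrivial E] (hK : IsStableDominated σ Λ K) : 0 ≤ Λ := by
  obtain ⟨z, hz⟩ := exists_ne (0 : E)
  exact nonneg_of_mul_nonneg_left ((hK.nonneg z hz).trans (hK.le z hz)) (by positivity)

theorem IsStableDominated.mul_min_mul_le (hK : IsStableDominated σ Λ K) {C : ℝ} (hC : 0 ≤ C) {z : E}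
    (hz : z ≠ 0) : C * min 1 (‖z‖ ^ 2) * K z ≤ C * Λ * levyProfile σ z := calc
  C * min 1 (‖z‖ ^ 2) * K z
    ≤ C * min 1 (‖z‖ ^ 2) * (Λ * ‖z‖ ^ (-(finrank ℝ E : ℝ) - σ)) := by gcongr; exact hK.le z hz
  _ = C * Λ * levyProfile σ z := by rw [levyProfile]; ring

variable [BorelSpace E]

theorem IsStableDominated.rescaledKernel (hK : IsStableDominated σ Λ K) (hR : 0 < R) :
    IsStableDominated σ Λ (rescaledKernel σ R K) where
  measurable := (hK.measurable.comp (measurable_const_smul R)).const_mul _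
  nonneg z hz := mul_nonneg (by positivity) (hK.nonneg _ (smul_ne_zero hR.ne' hz))
  le z hz := calc
    R ^ ((finrank ℝ E : ℝ) + σ) * K (R • z)
      ≤ R ^ ((finrank ℝ E : ℝ) + σ) * (Λ * ‖R • z‖ ^ (-(finrank ℝ E : ℝ) - σ)) := by
        gcongr; exact hK.le _ (smul_ne_zero hR.ne' hz)
    _ = R ^ ((finrank ℝ E : ℝ) + σ) * R ^ (-(finrank ℝ E : ℝ) - σ) *
          (Λ * ‖z‖ ^ (-(finrank ℝ E : ℝ) - σ)) := by
        rw [norm_smul, Real.norm_of_nonneg hR.le, Real.mul_rpow hR.le (norm_nonneg z)]; ring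
    _ = Λ * ‖z‖ ^ (-(finrank ℝ E : ℝ) - σ) := by
        rw [← Real.rpow_add hR, add_add_sub_cancel, add_neg_cancel, Real.rpow_zero, one_mul]

variable [FiniteDimensional ℝ E] {μ : Measure E} [μ.IsAddHaarMeasure]

theorem integrable_levyProfile [Nontrivial E] (hσ : σ ∈ Ioo 0 2) :
    Integrable (levyProfile σ : E → ℝ) μ := by
  rw [show (levyProfile σ : E → ℝ) = fun z ↦ (fun y : ℝ ↦ min 1 (y ^ 2) *
      y ^ (-(finrank ℝ E : ℝ) - σ)) ‖z‖ from rfl, integrable_fun_norm_addHaar μ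
      (f := fun y : ℝ ↦ min 1 (y ^ 2) * y ^ (-(finrank ℝ E : ℝ) - σ)),
    ← Ioc_union_Ioi_eq_Ioi zero_le_one]
  have radial {y : ℝ} (hy : 0 < y) :
      y ^ (finrank ℝ E - 1) * y ^ (-(finrank ℝ E : ℝ) - σ) = y ^ (-1 - σ) := by
    rw [← Real.rpow_natCast, ← Real.rpow_add hy, Nat.cast_sub finrank_pos]
    congr 1; push_cast; ring
  refine IntegrableOn.union ?_ ?_
  · have h : IntegrableOn (fun y : ℝ ↦ y ^ (1 - σ)) (Ioc 0 1) :=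
      (intervalIntegrable_iff_integrableOn_Ioc_of_le zero_le_one).1
        (intervalIntegral.intervalIntegrable_rpow' (by linarith [hσ.2]))
    refine h.congr_fun (fun y hy ↦ ?_) measurableSet_Ioc
    simp only [smul_eq_mul]
    rw [min_eq_right (pow_le_one₀ hy.1.le hy.2), mul_left_comm, radial hy.1, ← Real.rpow_natCast,
      ← Real.rpow_add hy.1]
    congr 1; push_cast; ring
  · have h : IntegrableOn (fun y : ℝ ↦ y ^ (-1 - σ)) (Ioi 1) :=
      integrableOn_Ioi_rpow_of_lt (by linarith [hσ.1]) one_pos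
    refine h.congr_fun (fun y (hy : 1 < y) ↦ ?_) measurableSet_Ioi
    simp only [smul_eq_mul]
    rw [min_eq_left (one_le_pow₀ hy.le), one_mul, radial (one_pos.trans hy)]

theorem IsStableDominated.integrable_secondDiff_mul [Nontrivial E] (hK : IsStableDominated σ Λ K)
    (hσ : σ ∈ Ioo 0 2) {f : E → ℝ} (hf : ContDiff ℝ 2 f) (hc : HasCompactSupport f) (x : E) :
    Integrable (fun z ↦ secondDiff f x z * K z) μ := by
  obtain ⟨C, hC0, hC⟩ := exists_abs_secondDiff_le_mul_min hf hc
  have hcont : Continuous (secondDiff f x) := by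
    have := hf.continuous
    unfold secondDiff
    fun_prop
  refine ((integrable_levyProfile hσ).const_mul (C * Λ)).mono'
    (hcont.measurable.mul hK.measurable).aestronglyMeasurable ?_
  filter_upwards [μ.ae_ne 0] with z hz
  rw [norm_mul, Real.norm_of_nonneg (hK.nonneg z hz)]
  exact (mul_le_mul_of_nonneg_right (hC x z) (hK.nonneg z hz)).trans
    (hK.mul_min_mul_le hC0 hz)

/-- The constant does not depend on `K`, so that it serves every rescaling of a given kernel. -/
theorem exists_integral_secondDiff_pow_mul_le [Nontrivial E] (hσ : σ ∈ Ioo 0 2) (hΛ : 0 ≤ Λ)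
    {f : E → ℝ} (hf : ContDiff ℝ 2 f) (hc : HasCompactSupport f) (hf0 : ∀ x, 0 ≤ f x) (k : ℕ) :
    ∃ A, 0 ≤ A ∧ ∀ K, IsStableDominated σ Λ K → ∀ x,
      ∫ z, secondDiff (fun y ↦ f y ^ (k + 1)) x z * K z ∂μ ≤ A * f x ^ k := by
  obtain ⟨C, hC0, hC⟩ := exists_abs_secondDiff_le_mul_min hf hc
  have hI : 0 ≤ ∫ z, levyProfile σ z ∂μ := integral_nonneg (levyProfile_nonneg σ)
  refine ⟨(k + 1) * C * Λ * ∫ z, levyProfile σ z ∂μ, by positivity, fun K hK x ↦ ?_⟩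
  have hkf : 0 ≤ (k + 1) * f x ^ k := by have := hf0 x; positivity
  have hpow : HasCompactSupport fun y ↦ f y ^ (k + 1) :=
    hc.comp_left (g := (· ^ (k + 1))) (by simp)
  calc ∫ z, secondDiff (fun y ↦ f y ^ (k + 1)) x z * K z ∂μ
      ≤ ∫ z, (k + 1) * f x ^ k * C * Λ * levyProfile σ z ∂μ := by
        refine integral_mono_ae (hK.integrable_secondDiff_mul hσ (hf.pow _) hpow x)
          ((integrable_levyProfile hσ).const_mul _) ?_
        filter_upwards [μ.ae_ne 0] with z hz
        refine le_trans ?_ (hK.mul_min_mul_le (mul_nonneg hkf hC0) hz)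
        refine mul_le_mul_of_nonneg_right ?_ (hK.nonneg z hz)
        rw [mul_assoc _ C]
        exact (secondDiff_pow_le hf0 k x z).trans
          (mul_le_mul_of_nonneg_left ((le_abs_self _).trans (hC x z)) hkf)
    _ = (k + 1) * C * Λ * (∫ z, levyProfile σ z ∂μ) * f x ^ k := by
        rw [integral_const_mul]; ring

theorem integral_secondDiff_comp_inv_smul_mul (hR : 0 < R) (f K : E → ℝ) (x : E) :
    ∫ z, secondDiff (fun y ↦ f (R⁻¹ • y)) x z * K z ∂μ =
      R ^ (-σ) * ∫ z, secondDiff f (R⁻¹ • x) z * rescaledKernel σ R K z ∂μ := by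
  have hpow : R ^ (-σ) * R ^ ((finrank ℝ E : ℝ) + σ) = R ^ finrank ℝ E := by
    rw [← Real.rpow_add hR, neg_add_cancel_comm_assoc, Real.rpow_natCast]
  calc ∫ z, secondDiff (fun y ↦ f (R⁻¹ • y)) x z * K z ∂μ
      = ∫ z, (fun w ↦ secondDiff f (R⁻¹ • x) w * K (R • w)) (R⁻¹ • z) ∂μ := by
        simp only [secondDiff_comp_smul, smul_inv_smul₀ hR.ne']
    _ = R ^ finrank ℝ E * ∫ w, secondDiff f (R⁻¹ • x) w * K (R • w) ∂μ := by
        rw [Measure.integral_comp_inv_smul_of_nonneg μ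
          (fun w ↦ secondDiff f (R⁻¹ • x) w * K (R • w)) hR.le, smul_eq_mul]
    _ = R ^ (-σ) * ∫ z, secondDiff f (R⁻¹ • x) z * rescaledKernel σ R K z ∂μ := by
        simp only [rescaledKernel, mul_left_comm (secondDiff _ _ _), integral_const_mul]
        rw [← mul_assoc, hpow]

end Kernel

section RealVariable

theorem le_rpow_of_le_mul_rpow_inv {x M q q' : ℝ} (hq : q.HolderConjugate q') (hx : 0 ≤ x)
    (hM : 0 ≤ M) (h : x ≤ M * x ^ (1 / q)) : x ≤ M ^ q' := by
  rcases hx.eq_or_lt with rfl | hx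
  · positivity
  have hsplit : x ^ (1 / q') * x ^ (1 / q) = x := by
    rw [← Real.rpow_add hx, add_comm, one_div, one_div, hq.inv_add_inv_eq_one, Real.rpow_one]
  have hle : x ^ (1 / q') ≤ M := le_of_mul_le_mul_right (hsplit.trans_le h) (by positivity)
  rwa [one_div, Real.rpow_inv_le_iff_of_pos hx.le hM hq.symm.pos] at hle

/-- Hölder's inequality on the support of `w`, where `hk` gives `w ^ (k * q) ≤ w ^ (k + 1)`. -/
theorem integral_mul_pow_le_rpow_mul_measureReal_support {α : Type*} [MeasurableSpace α]
    {μ : Measure α} {u w : α → ℝ} {q q' : ℝ} {k : ℕ} (hq : q.HolderConjugate q')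
    (hk : (k : ℝ) + 1 ≤ k * q) (hu : Measurable u) (hu0 : ∀ x, 0 ≤ u x) (hw : Measurable w)
    (hw0 : ∀ x, 0 ≤ w x) (hw1 : ∀ x, w x ≤ 1) (hsupp : μ (Function.support w) ≠ ⊤)
    (hint : Integrable (fun x ↦ u x ^ q * w x ^ (k + 1)) μ) :
    ∫ x, u x * w x ^ k ∂μ ≤
      (∫ x, u x ^ q * w x ^ (k + 1) ∂μ) ^ (1 / q) * μ.real (Function.support w) ^ (1 / q') := by
  have hk0 : k ≠ 0 := by rintro rfl; norm_num at hk
  have hS : MeasurableSet (Function.support w) := measurableSet_support hw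
  have hnonneg (x : α) : 0 ≤ u x * w x ^ k := mul_nonneg (hu0 x) (pow_nonneg (hw0 x) k)
  have hpow (x : α) : (u x * w x ^ k) ^ q ≤ u x ^ q * w x ^ (k + 1) := by
    rw [Real.mul_rpow (hu0 x) (pow_nonneg (hw0 x) k), ← Real.rpow_natCast_mul (hw0 x),
      ← Real.rpow_natCast (w x) (k + 1)]
    refine mul_le_mul_of_nonneg_left ?_ (Real.rpow_nonneg (hu0 x) q)
    exact Real.rpow_le_rpow_of_exponent_ge_of_imp (hw0 x) (hw1 x) (by push_cast; exact hk)
      fun _ hkq ↦ by linarith [k.cast_nonneg (α := ℝ)]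
  have hLq : MemLp (fun x ↦ u x * w x ^ k) (ENNReal.ofReal q) μ := by
    rw [← integrable_norm_rpow_iff (by fun_prop) (by simp [hq.pos]) ENNReal.ofReal_ne_top,
      ENNReal.toReal_ofReal hq.nonneg]
    refine hint.mono' ((hu.mul (hw.pow_const k)).norm.pow_const q).aestronglyMeasurable
      (.of_forall fun x ↦ ?_)
    rw [Real.norm_of_nonneg (hnonneg x), Real.norm_of_nonneg (Real.rpow_nonneg (hnonneg x) q)]
    exact hpow x
  have hindicator (x : α) : (Function.support w).indicator (1 : α → ℝ) x ^ q' =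
      (Function.support w).indicator 1 x := by
    by_cases hx : x ∈ Function.support w <;> simp [hx, hq.symm.ne_zero]
  calc ∫ x, u x * w x ^ k ∂μ
      = ∫ x, u x * w x ^ k * (Function.support w).indicator 1 x ∂μ := by
        refine integral_congr_ae (.of_forall fun x ↦ ?_)
        by_cases hx : w x = 0 <;> simp [hx, hk0]
    _ ≤ (∫ x, (u x * w x ^ k) ^ q ∂μ) ^ (1 / q) *
          (∫ x, (Function.support w).indicator (1 : α → ℝ) x ^ q' ∂μ) ^ (1 / q') :=
        integral_mul_le_Lp_mul_Lq_of_nonneg hq (.of_forall hnonneg)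
          (.of_forall (indicator_nonneg fun _ _ ↦ zero_le_one)) hLq
          (memLp_indicator_const _ hS 1 (.inr hsupp))
    _ ≤ (∫ x, u x ^ q * w x ^ (k + 1) ∂μ) ^ (1 / q) * μ.real (Function.support w) ^ (1 / q') := by
        simp only [hindicator, integral_indicator_one hS]
        have hpow0 (x : α) : 0 ≤ (u x * w x ^ k) ^ q := Real.rpow_nonneg (hnonneg x) q
        exact mul_le_mul_of_nonneg_right (Real.rpow_le_rpow (integral_nonneg hpow0)
          (integral_mono_of_nonneg (.of_forall hpow0) hint (.of_forall hpow)) hq.one_div_nonneg)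
          (by positivity)

end RealVariable

theorem tendsto_setIntegral_compl_ball_atTop {α F : Type*} [PseudoMetricSpace α]
    [MeasurableSpace α] [OpensMeasurableSpace α] [NormedAddCommGroup F] [NormedSpace ℝ F]
    {μ : Measure α} {f : α → F} (hf : Integrable f μ) (a : α) :
    Tendsto (fun ρ : ℝ ↦ ∫ x in (ball a ρ)ᶜ, f x ∂μ) atTop (𝓝 0) := by
  have hball : Tendsto (fun ρ : ℝ ↦ ∫ x in ball a ρ, f x ∂μ) atTop (𝓝 (∫ x, f x ∂μ)) :=
    (aecover_ball tendsto_id).integral_tendsto_of_countably_generated hf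
  simpa only [setIntegral_compl measurableSet_ball hf, sub_self] using hball.const_sub (∫ x, f x ∂μ)

section Cutoff

variable {E : Type*} [NormedAddCommGroup E] [NormedSpace ℝ E] [FiniteDimensional ℝ E]

variable (E) in
/-- The standard smooth cutoff, equal to `1` on the ball of radius `R` and supported in the ball of
radius `2R`. -/
def doublingBump (R : ℝ) (hR : 0 < R) : ContDiffBump (0 : E) := ⟨R, 2 * R, hR, by linarith⟩

theorem doublingBump_apply {R : ℝ} (hR : 0 < R) (x : E) :
    doublingBump E R hR x = doublingBump E 1 one_pos (R⁻¹ • x) := by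
  simp [ContDiffBump.apply, doublingBump, hR.ne']

theorem support_doublingBump {R : ℝ} (hR : 0 < R) :
    Function.support (doublingBump E R hR) = ball 0 (2 * R) :=
  (doublingBump E R hR).support_eq

variable [MeasurableSpace E]

/-- The outcome of testing `L u ≥ u ^ q`, for an operator `L` of order `σ`, against the power
`k + 1` of the standard cutoffs at all scales. -/
def SatisfiesCutoffInequality (μ : Measure E) (q σ A : ℝ) (k : ℕ) (u : E → ℝ) : Prop :=
  ∀ R (hR : 0 < R), ∫ x, u x ^ q * doublingBump E R hR x ^ (k + 1) ∂μ ≤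
    A * R ^ (-σ) * ∫ x, u x * doublingBump E R hR x ^ k ∂μ

variable [BorelSpace E] {μ : Measure E}

theorem integrable_mul_bump_pow {c : E} {f : E → ℝ} (hf : LocallyIntegrable f μ)
    (b : ContDiffBump c) {k : ℕ} (hk : k ≠ 0) : Integrable (fun x ↦ f x * b x ^ k) μ :=
  hf.integrable_smul_right_of_hasCompactSupport (b.continuous.pow k)
    (b.hasCompactSupport.comp_left (g := (· ^ k)) (zero_pow hk))

theorem setIntegral_ball_le_integral_mul_bump_pow {f : E → ℝ} (hf : LocallyIntegrable f μ)
    (hf0 : ∀ x, 0 ≤ f x) {R : ℝ} (hR : 0 < R) {k : ℕ} (hk : k ≠ 0) :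
    ∫ x in ball 0 R, f x ∂μ ≤ ∫ x, f x * doublingBump E R hR x ^ k ∂μ := calc
  ∫ x in ball 0 R, f x ∂μ = ∫ x in ball 0 R, f x * doublingBump E R hR x ^ k ∂μ := by
    refine setIntegral_congr_fun measurableSet_ball fun x hx ↦ ?_
    simp [(doublingBump E R hR).one_of_mem_closedBall (ball_subset_closedBall hx)]
  _ ≤ ∫ x, f x * doublingBump E R hR x ^ k ∂μ :=
    setIntegral_le_integral (integrable_mul_bump_pow hf _ hk)
      (.of_forall fun x ↦ mul_nonneg (hf0 x) (pow_nonneg (ContDiffBump.nonneg _) k))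

variable [μ.IsAddHaarMeasure] {q q' σ A : ℝ} {k : ℕ} {u : E → ℝ}

theorem rpow_neg_mul_measureReal_ball_rpow_le (hq' : 0 < q') (hσ : finrank ℝ E ≤ σ * q') {R : ℝ}
    (hR : 1 ≤ R) :
    R ^ (-σ) * μ.real (ball 0 (2 * R)) ^ (1 / q') ≤ μ.real (ball 0 2) ^ (1 / q') := by
  have hR0 : 0 < R := one_pos.trans_le hR
  have hball : μ.real (ball 0 (2 * R)) = R ^ (finrank ℝ E : ℝ) * μ.real (ball 0 2) := by
    rw [mul_comm 2 R, measureReal_def, Measure.addHaar_ball_mul_of_pos μ 0 hR0, ENNReal.toReal_mul,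
      ENNReal.toReal_ofReal (by positivity), Real.rpow_natCast, measureReal_def]
  have hexp : -σ + finrank ℝ E * (1 / q') ≤ 0 := by
    rw [mul_one_div, neg_add_nonpos_iff, div_le_iff₀ hq']
    exact hσ
  calc R ^ (-σ) * μ.real (ball 0 (2 * R)) ^ (1 / q')
      = R ^ (-σ + finrank ℝ E * (1 / q')) * μ.real (ball 0 2) ^ (1 / q') := by
        rw [hball, Real.mul_rpow (by positivity) measureReal_nonneg, ← Real.rpow_mul hR0.le,
          Real.rpow_add hR0, mul_assoc]
    _ ≤ μ.real (ball 0 2) ^ (1 / q') :=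
        mul_le_of_le_one_left (by positivity) (Real.rpow_le_one_of_one_le_of_nonpos hR hexp)

theorem rpow_neg_mul_setIntegral_mul_bump_pow_le (hq : q.HolderConjugate q')
    (hσ : finrank ℝ E ≤ σ * q') (hk : (k : ℝ) + 1 ≤ k * q) (hu : Measurable u) (hu0 : ∀ x, 0 ≤ u x)
    (huq : LocallyIntegrable (fun x ↦ u x ^ q) μ) {R : ℝ} (hR : 1 ≤ R) (T : Set E) :
    letI b : ContDiffBump (0 : E) := doublingBump E R (one_pos.trans_le hR)
    R ^ (-σ) * ∫ x in T, u x * b x ^ k ∂μ ≤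
      μ.real (ball 0 2) ^ (1 / q') * (∫ x in T, u x ^ q * b x ^ (k + 1) ∂μ) ^ (1 / q) := by
  have hR0 : 0 < R := one_pos.trans_le hR
  let b : ContDiffBump (0 : E) := doublingBump E R hR0
  let J := ∫ x in T, u x ^ q * b x ^ (k + 1) ∂μ
  have hJ : 0 ≤ J := integral_nonneg fun x ↦
    mul_nonneg (Real.rpow_nonneg (hu0 x) q) (pow_nonneg b.nonneg _)
  have hTop : μ.restrict T (Function.support b) ≠ ⊤ := by
    rw [support_doublingBump]; exact measure_ball_lt_top.ne
  calc R ^ (-σ) * ∫ x in T, u x * b x ^ k ∂μ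
      ≤ R ^ (-σ) * (J ^ (1 / q) * (μ.restrict T).real (Function.support b) ^ (1 / q')) := by
        gcongr
        exact integral_mul_pow_le_rpow_mul_measureReal_support hq hk hu hu0 b.continuous.measurable
          b.nonneg' (fun _ ↦ b.le_one) hTop
          (integrable_mul_bump_pow huq b k.succ_ne_zero).integrableOn
    _ ≤ R ^ (-σ) * (J ^ (1 / q) * μ.real (ball 0 (2 * R)) ^ (1 / q')) := by
        rw [support_doublingBump]
        gcongr
        · exact hq.symm.one_div_nonneg
        · exact ENNReal.toReal_mono measure_ball_lt_top.ne (Measure.restrict_apply_le _ _)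
    _ = R ^ (-σ) * μ.real (ball 0 (2 * R)) ^ (1 / q') * J ^ (1 / q) := by ring
    _ ≤ μ.real (ball 0 2) ^ (1 / q') * J ^ (1 / q) := by
        gcongr
        exact rpow_neg_mul_measureReal_ball_rpow_le hq.symm.pos hσ hR

theorem SatisfiesCutoffInequality.setIntegral_ball_rpow_le
    (h : SatisfiesCutoffInequality μ q σ A k u) (hA : 0 ≤ A) (hq : q.HolderConjugate q')
    (hσ : finrank ℝ E ≤ σ * q') (hk : (k : ℝ) + 1 ≤ k * q) (hu : Measurable u) (hu0 : ∀ x, 0 ≤ u x)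
    (huq : LocallyIntegrable (fun x ↦ u x ^ q) μ) {R : ℝ} (hR : 1 ≤ R) :
    ∫ x in ball 0 R, u x ^ q ∂μ ≤ (A * μ.real (ball 0 2) ^ (1 / q')) ^ q' := by
  have hR0 : 0 < R := one_pos.trans_le hR
  have huq0 (x : E) : 0 ≤ u x ^ q := Real.rpow_nonneg (hu0 x) q
  refine (setIntegral_ball_le_integral_mul_bump_pow huq huq0 hR0 k.succ_ne_zero).trans ?_
  refine le_rpow_of_le_mul_rpow_inv hq (integral_nonneg fun x ↦
    mul_nonneg (huq0 x) (pow_nonneg (ContDiffBump.nonneg _) _)) (by positivity) ?_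
  have hHolder := rpow_neg_mul_setIntegral_mul_bump_pow_le hq hσ hk hu hu0 huq hR univ
  simp only [setIntegral_univ] at hHolder
  refine (h R hR0).trans ?_
  rw [mul_assoc, mul_assoc]
  exact mul_le_mul_of_nonneg_left hHolder hA

theorem SatisfiesCutoffInequality.integrable_rpow
    (h : SatisfiesCutoffInequality μ q σ A k u) (hA : 0 ≤ A) (hq : q.HolderConjugate q')
    (hσ : finrank ℝ E ≤ σ * q') (hk : (k : ℝ) + 1 ≤ k * q) (hu : Measurable u) (hu0 : ∀ x, 0 ≤ u x)
    (huq : LocallyIntegrable (fun x ↦ u x ^ q) μ) : Integrable (fun x ↦ u x ^ q) μ := by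
  have hcover : AECover μ atTop fun R : ℝ ↦ ball (0 : E) R := aecover_ball tendsto_id
  refine hcover.integrable_of_integral_bounded_of_nonneg_ae
    ((A * μ.real (ball 0 2) ^ (1 / q')) ^ q')
    (fun R ↦ (huq.integrableOn_isCompact (isCompact_closedBall 0 R)).mono_set
      ball_subset_closedBall)
    (.of_forall fun x ↦ Real.rpow_nonneg (hu0 x) q) ?_
  filter_upwards [eventually_ge_atTop 1] with R hR
  exact h.setIntegral_ball_rpow_le hA hq hσ hk hu hu0 huq hR

/-- This splitting settles the critical exponent: the first term vanishes as `R → ∞`, the second as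
`ρ → ∞`. -/
theorem SatisfiesCutoffInequality.setIntegral_ball_rpow_le_add_tail
    (h : SatisfiesCutoffInequality μ q σ A k u) (hA : 0 ≤ A) (hq : q.HolderConjugate q')
    (hσ : finrank ℝ E ≤ σ * q') (hk : (k : ℝ) + 1 ≤ k * q) (hu : Measurable u) (hu0 : ∀ x, 0 ≤ u x)
    (hloc : LocallyIntegrable u μ) (huq : Integrable (fun x ↦ u x ^ q) μ) {R : ℝ} (hR : 1 ≤ R)
    (ρ : ℝ) :
    ∫ x in ball 0 R, u x ^ q ∂μ ≤ A * R ^ (-σ) * ∫ x in ball 0 ρ, u x ∂μ +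
      A * (μ.real (ball 0 2) ^ (1 / q') * (∫ x in (ball 0 ρ)ᶜ, u x ^ q ∂μ) ^ (1 / q)) := by
  have hR0 : 0 < R := one_pos.trans_le hR
  have hk0 : k ≠ 0 := by rintro rfl; norm_num at hk
  have huq0 (x : E) : 0 ≤ u x ^ q := Real.rpow_nonneg (hu0 x) q
  let b : ContDiffBump (0 : E) := doublingBump E R hR0
  have hub : Integrable (fun x ↦ u x * b x ^ k) μ := integrable_mul_bump_pow hloc b hk0
  have hnear : ∫ x in ball 0 ρ, u x * b x ^ k ∂μ ≤ ∫ x in ball 0 ρ, u x ∂μ :=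
    setIntegral_mono hub.integrableOn ((hloc.integrableOn_isCompact
      (isCompact_closedBall 0 ρ)).mono_set ball_subset_closedBall) fun x ↦
      mul_le_of_le_one_right (hu0 x) (pow_le_one₀ b.nonneg b.le_one)
  have htail : ∫ x in (ball 0 ρ)ᶜ, u x ^ q * b x ^ (k + 1) ∂μ ≤ ∫ x in (ball 0 ρ)ᶜ, u x ^ q ∂μ :=
    setIntegral_mono (integrable_mul_bump_pow huq.locallyIntegrable b k.succ_ne_zero).integrableOn
      huq.integrableOn fun x ↦ mul_le_of_le_one_right (huq0 x) (pow_le_one₀ b.nonneg b.le_one)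
  calc ∫ x in ball 0 R, u x ^ q ∂μ
      ≤ ∫ x, u x ^ q * b x ^ (k + 1) ∂μ :=
        setIntegral_ball_le_integral_mul_bump_pow huq.locallyIntegrable huq0 hR0 k.succ_ne_zero
    _ ≤ A * R ^ (-σ) * ∫ x, u x * b x ^ k ∂μ := h R hR0
    _ = A * R ^ (-σ) * ∫ x in ball 0 ρ, u x * b x ^ k ∂μ +
          A * (R ^ (-σ) * ∫ x in (ball 0 ρ)ᶜ, u x * b x ^ k ∂μ) := by
        rw [← integral_add_compl (measurableSet_ball (x := (0 : E)) (ε := ρ)) hub]; ring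
    _ ≤ A * R ^ (-σ) * ∫ x in ball 0 ρ, u x ∂μ + A * (μ.real (ball 0 2) ^ (1 / q') *
          (∫ x in (ball 0 ρ)ᶜ, u x ^ q * b x ^ (k + 1) ∂μ) ^ (1 / q)) :=
        add_le_add (mul_le_mul_of_nonneg_left hnear (by positivity)) (mul_le_mul_of_nonneg_left
          (rpow_neg_mul_setIntegral_mul_bump_pow_le hq hσ hk hu hu0 huq.locallyIntegrable hR _) hA)
    _ ≤ _ := by
        have htail0 : 0 ≤ ∫ x in (ball 0 ρ)ᶜ, u x ^ q * b x ^ (k + 1) ∂μ :=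
          integral_nonneg fun x ↦ mul_nonneg (huq0 x) (pow_nonneg b.nonneg _)
        have := Real.rpow_le_rpow htail0 htail hq.one_div_nonneg
        exact add_le_add_right (mul_le_mul_of_nonneg_left
          (mul_le_mul_of_nonneg_left this (by positivity)) hA) _

theorem SatisfiesCutoffInequality.ae_eq_zero
    (h : SatisfiesCutoffInequality μ q σ A k u) (hA : 0 ≤ A) (hq : q.HolderConjugate q')
    (hσ0 : 0 < σ) (hσ : finrank ℝ E ≤ σ * q') (hk : (k : ℝ) + 1 ≤ k * q) (hu : Measurable u)
    (hu0 : ∀ x, 0 ≤ u x) (hloc : LocallyIntegrable u μ)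
    (huq : LocallyIntegrable (fun x ↦ u x ^ q) μ) : ∀ᵐ x ∂μ, u x = 0 := by
  have hint : Integrable (fun x ↦ u x ^ q) μ := h.integrable_rpow hA hq hσ hk hu hu0 huq
  have htail (ρ : ℝ) : ∫ x, u x ^ q ∂μ ≤
      A * (μ.real (ball 0 2) ^ (1 / q') * (∫ x in (ball 0 ρ)ᶜ, u x ^ q ∂μ) ^ (1 / q)) := by
    have hleft : Tendsto (fun R : ℝ ↦ ∫ x in ball 0 R, u x ^ q ∂μ) atTop (𝓝 (∫ x, u x ^ q ∂μ)) :=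
      (aecover_ball tendsto_id).integral_tendsto_of_countably_generated hint
    have hright := (((tendsto_rpow_neg_atTop hσ0).const_mul A).mul_const
      (∫ x in ball 0 ρ, u x ∂μ)).add_const
      (A * (μ.real (ball 0 2) ^ (1 / q') * (∫ x in (ball 0 ρ)ᶜ, u x ^ q ∂μ) ^ (1 / q)))
    rw [mul_zero, zero_mul, zero_add] at hright
    refine le_of_tendsto_of_tendsto hleft hright ?_
    filter_upwards [eventually_ge_atTop 1] with R hR
    exact h.setIntegral_ball_rpow_le_add_tail hA hq hσ hk hu hu0 hloc hint hR ρ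
  have hle : ∫ x, u x ^ q ∂μ ≤ 0 := by
    have hlim := (((tendsto_setIntegral_compl_ball_atTop hint 0).rpow_const
      (.inr hq.one_div_nonneg)).const_mul (μ.real (ball 0 2) ^ (1 / q'))).const_mul A
    rw [Real.zero_rpow hq.one_div_ne_zero, mul_zero, mul_zero] at hlim
    exact ge_of_tendsto hlim (.of_forall htail)
  have huq0 (x : E) : 0 ≤ u x ^ q := Real.rpow_nonneg (hu0 x) q
  filter_upwards [(integral_eq_zero_iff_of_nonneg huq0 hint).1
    (hle.antisymm (integral_nonneg huq0))] with x hx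
  exact (Real.rpow_eq_zero (hu0 x) hq.ne_zero).1 hx

end Cutoff

section Supersolution

/-- Applied to `f = u * LK n K φ`, whose integrability is not part of the definition of a weak
supersolution, so that its Bochner integral could be the junk value `0`. -/
theorem integral_le_integral_of_le_of_nonneg {α : Type*} [MeasurableSpace α] {μ : Measure α}
    {f g : α → ℝ} (hg : Integrable g μ) (hg0 : ∀ x, 0 ≤ g x) (h : ∀ x, f x ≤ g x) :
    ∫ x, f x ∂μ ≤ ∫ x, g x ∂μ := by
  by_cases hf : Integrable f μ
  · exact integral_mono hf hg h
  · rw [integral_undef hf]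
    exact integral_nonneg hg0

variable {n : ℕ} {s lam Lam q : ℝ} {K u : Euc n → ℝ} {k : ℕ}

theorem IsAdmissibleKernel.isStableDominated (hK : IsAdmissibleKernel n s lam Lam K) :
    IsStableDominated (2 * s) Lam K := by
  obtain ⟨hlam, -, hmeas, -, hbound⟩ := hK
  refine ⟨hmeas, fun z hz ↦ le_trans (by positivity) (hbound z hz).1, fun z hz ↦ ?_⟩
  rw [finrank_euclideanSpace_fin]
  exact (hbound z hz).2

theorem isTestFun_contDiffBump_pow {c : Euc n} (b : ContDiffBump c) (hk : k ≠ 0) :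
    IsTestFun n fun x ↦ b x ^ k :=
  ⟨b.contDiff.pow k, b.hasCompactSupport.comp_left (g := (· ^ k)) (zero_pow hk)⟩

theorem MemLqLoc.locallyIntegrable (hu : MemLqLoc n q u) :
    LocallyIntegrable (fun x ↦ u x ^ q) volume := fun x ↦
  ⟨ball 0 (‖x‖ + 1), isOpen_ball.mem_nhds (by simp), hu _ (by positivity)⟩

theorem exists_LK_doublingBump_pow_le [NeZero n] (hs : s ∈ Ioo 0 1)
    (hK : IsStableDominated (2 * s) Lam K) (k : ℕ) :
    ∃ A, 0 ≤ A ∧ ∀ R (hR : 0 < R) x, LK n K (fun y ↦ doublingBump (Euc n) R hR y ^ (k + 1)) x ≤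
      A * R ^ (-(2 * s)) * doublingBump (Euc n) R hR x ^ k := by
  let b := doublingBump (Euc n) 1 one_pos
  have hσ : 2 * s ∈ Ioo 0 2 := ⟨by linarith [hs.1], by linarith [hs.2]⟩
  obtain ⟨A, hA, hbound⟩ := exists_integral_secondDiff_pow_mul_le (μ := (volume : Measure (Euc n)))
    hσ hK.const_nonneg b.contDiff b.hasCompactSupport b.nonneg' k
  refine ⟨1 / 2 * A, by positivity, fun R hR x ↦ ?_⟩
  simp only [doublingBump_apply hR]
  calc LK n K (fun y ↦ b (R⁻¹ • y) ^ (k + 1)) x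
      = 1 / 2 * (R ^ (-(2 * s)) * ∫ z, secondDiff (fun y ↦ b y ^ (k + 1)) (R⁻¹ • x) z *
          rescaledKernel (2 * s) R K z) := by
        rw [← integral_secondDiff_comp_inv_smul_mul hR (fun y ↦ b y ^ (k + 1))]
        rfl
    _ ≤ 1 / 2 * (R ^ (-(2 * s)) * (A * b (R⁻¹ • x) ^ k)) := by
        gcongr
        exact hbound _ (hK.rescaledKernel hR) _
    _ = 1 / 2 * A * R ^ (-(2 * s)) * b (R⁻¹ • x) ^ k := by ring

theorem IsWeakSupersol.exists_satisfiesCutoffInequality [NeZero n] (hu : IsWeakSupersol n s q K u)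
    (hs : s ∈ Ioo 0 1) (hK : IsStableDominated (2 * s) Lam K) (hk : k ≠ 0) :
    ∃ A, 0 ≤ A ∧ SatisfiesCutoffInequality volume q (2 * s) A k u := by
  obtain ⟨-, hu0, -, ⟨hloc, -⟩, hsuper⟩ := hu
  obtain ⟨A, hA, hLK⟩ := exists_LK_doublingBump_pow_le hs hK k
  refine ⟨A, hA, fun R hR ↦ ?_⟩
  let b := doublingBump (Euc n) R hR
  calc ∫ x, u x ^ q * b x ^ (k + 1)
      ≤ ∫ x, u x * LK n K (fun y ↦ b y ^ (k + 1)) x :=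
        hsuper _ (isTestFun_contDiffBump_pow b k.succ_ne_zero) fun _ ↦ pow_nonneg b.nonneg _
    _ ≤ ∫ x, A * R ^ (-(2 * s)) * (u x * b x ^ k) := by
        have hint := (integrable_mul_bump_pow hloc b hk).const_mul (A * R ^ (-(2 * s)))
        refine integral_le_integral_of_le_of_nonneg hint (fun x ↦ ?_) fun x ↦ ?_
        · have := hu0 x
          have := b.nonneg (x := x)
          positivity
        · rw [mul_left_comm]
          exact mul_le_mul_of_nonneg_left (hLK R hR x) (hu0 x)
    _ = A * R ^ (-(2 * s)) * ∫ x, u x * b x ^ k := integral_const_mul _ _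

theorem le_mul_conjExponent_of_le_div_sub {d σ q : ℝ} (hσ : 0 < σ) (hq1 : 1 < q)
    (hq : σ < d → q ≤ d / (d - σ)) : d ≤ σ * q.conjExponent := by
  rw [Real.conjExponent, ← mul_div_assoc, le_div_iff₀ (sub_pos.2 hq1)]
  rcases lt_or_ge σ d with hσd | hσd
  · linarith [(le_div_iff₀ (sub_pos.2 hσd)).1 (hq hσd)]
  · nlinarith

theorem exists_natCast_add_one_le_mul {q : ℝ} (hq : 1 < q) : ∃ k : ℕ, (k : ℝ) + 1 ≤ k * q := by
  obtain ⟨k, hk⟩ := exists_nat_ge (1 / (q - 1))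
  exact ⟨k, by linarith [(div_le_iff₀ (sub_pos.2 hq)).1 hk]⟩

end Supersolution

theorem liouville_nonlocal_laneEmden_general {n : ℕ} (hn : 1 ≤ n) {s : ℝ} (hs : s ∈ Ioo 0 1)
    {Lam : ℝ} {K : Euc n → ℝ} (hK : IsStableDominated (2 * s) Lam K) {q : ℝ} (hq1 : 1 < q)
    (hq2 : 2 * s < n → q ≤ n / (n - 2 * s)) {u : Euc n → ℝ} (hu : IsWeakSupersol n s q K u) :
    ∀ᵐ x, u x = 0 := by
  have : NeZero n := ⟨Nat.one_le_iff_ne_zero.1 hn⟩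
  have hσ : 0 < 2 * s := by linarith [hs.1]
  obtain ⟨k, hk⟩ := exists_natCast_add_one_le_mul hq1
  have hk0 : k ≠ 0 := by rintro rfl; norm_num at hk
  obtain ⟨A, hA, hcutoff⟩ := hu.exists_satisfiesCutoffInequality hs hK hk0
  obtain ⟨hmeas, hu0, huq, ⟨hloc, -⟩, -⟩ := hu
  have hdim : finrank ℝ (Euc n) ≤ 2 * s * q.conjExponent := by
    rw [finrank_euclideanSpace_fin]
    exact le_mul_conjExponent_of_le_div_sub hσ hq1 hq2
  exact hcutoff.ae_eq_zero hA (.conjExponent hq1) hσ hdim hk hmeas hu0 hloc huq.locallyIntegrable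

/-- Liouville theorem for nonnegative weak supersolutions of
`L_K u = u^q` in the full range `1 < q ≤ n/(n-2s)` (any `q > 1` if `n ≤ 2s`). -/
theorem liouville_nonlocal_laneEmden
    (n : ℕ) (hn : 1 ≤ n) (s : ℝ) (hs : s ∈ Set.Ioo (0 : ℝ) 1)
    (lam Lam : ℝ) (K : Euc n → ℝ) (hK : IsAdmissibleKernel n s lam Lam K)
    (q : ℝ) (hq1 : 1 < q)
    (hq2 : 2 * s < (n : ℝ) → q ≤ (n : ℝ) / ((n : ℝ) - 2 * s))
    (u : Euc n → ℝ) (hu : IsWeakSupersol n s q K u) :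
    ∀ᵐ x : Euc n, u x = 0 :=
  liouville_nonlocal_laneEmden_general hn hs hK.isStableDominated hq1 hq2 hu
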